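/- In the polynomial ring R = ℂ[a,b,c,d,e,f], the ideal generated by u₀, u₁, u₂ equals the intersection of the six ideals 𝔭₁ = (b−c, a−c), 𝔭₂ = (e−f, d−f), 𝔭₃ = (e−f, a−b), 𝔭₄ = (d−e, b−c), 𝔭₅ = (d−f, a−c), 𝔭₆ = (c−d, b−e, a−f). (Hence the indeterminacy scheme of the Pascal map for the symbol [A B C; F E D] is the reduced union of the six corresponding polydiagonals.) -/

import Mathlib

open MvPolynomial

namespace PascalIndet

noncomputable section

/-- The variables `a, b, c, d, e, f` of the polynomial ring `R = ℂ[a,b,c,d,e,f]`. -/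
def a : MvPolynomial (Fin 6) ℂ := X 0
def b : MvPolynomial (Fin 6) ℂ := X 1
def c : MvPolynomial (Fin 6) ℂ := X 2
def d : MvPolynomial (Fin 6) ℂ := X 3
def e : MvPolynomial (Fin 6) ℂ := X 4
def f : MvPolynomial (Fin 6) ℂ := X 5

/-- The coordinates `u₀, u₁, u₂` of the Pascal line of the array
`[τ a, τ b, τ c; τ f, τ e, τ d]`. -/
def u0 : MvPolynomial (Fin 6) ℂ :=
  a*b*d*e - a*b*d*f - a*c*d*e + a*c*e*f + b*c*d*f - b*c*e*f
def u1 : MvPolynomial (Fin 6) ℂ :=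
  -(a*b*e) + a*b*f + a*c*d - a*c*f + a*d*f - a*e*f - b*c*d + b*c*e - b*d*e + b*e*f + c*d*e - c*d*f
def u2 : MvPolynomial (Fin 6) ℂ :=
  -(a*d) + a*e + b*d - b*f - c*e + c*f

/-- If the substitution `X i ↦ v i` kills a set `S` and is trivial modulo `S`, then its kernel is
the ideal generated by `S`. -/
theorem span_eq_ker_aeval {σ k : Type*} [CommRing k] {S : Set (MvPolynomial σ k)}
    {v : σ → MvPolynomial σ k} (hS : ∀ g ∈ S, aeval v g = 0)
    (hv : ∀ i, X i - v i = 0 ∨ X i - v i ∈ S) :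
    Ideal.span S = RingHom.ker (aeval v : MvPolynomial σ k →ₐ[k] MvPolynomial σ k) := by
  refine le_antisymm (Ideal.span_le.2 hS) fun F hF => ?_
  have key : (Ideal.Quotient.mkₐ k (Ideal.span S)).comp (aeval v) =
      Ideal.Quotient.mkₐ k (Ideal.span S) := by
    ext i
    simp only [AlgHom.comp_apply, aeval_X, Ideal.Quotient.mkₐ_eq_mk]
    refine (Ideal.Quotient.eq.2 ?_).symm
    rcases hv i with h | h
    · simp [h]
    · exact Ideal.subset_span h
  have hF' := DFunLike.congr_fun key F
  rw [AlgHom.comp_apply, show aeval v F = 0 from hF, map_zero] at hF'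
  exact Ideal.Quotient.eq_zero_iff_mem.1 hF'.symm

theorem span_abc_eq_ker : Ideal.span {b - c, a - c} = RingHom.ker
    (aeval (![X 2, X 2, X 2, X 3, X 4, X 5] : Fin 6 → MvPolynomial (Fin 6) ℂ)) := by
  refine span_eq_ker_aeval ?_ fun i => ?_
  · simp [a, b, c]
  · fin_cases i <;> simp [a, b, c]

theorem span_def_eq_ker : Ideal.span {e - f, d - f} = RingHom.ker
    (aeval (![X 0, X 1, X 2, X 5, X 5, X 5] : Fin 6 → MvPolynomial (Fin 6) ℂ)) := by
  refine span_eq_ker_aeval ?_ fun i => ?_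
  · simp [d, e, f]
  · fin_cases i <;> simp [d, e, f]

theorem span_ef_ab_eq_ker : Ideal.span {e - f, a - b} = RingHom.ker
    (aeval (![X 1, X 1, X 2, X 3, X 5, X 5] : Fin 6 → MvPolynomial (Fin 6) ℂ)) := by
  refine span_eq_ker_aeval ?_ fun i => ?_
  · simp [a, b, e, f]
  · fin_cases i <;> simp [a, b, e, f]

theorem span_de_bc_eq_ker : Ideal.span {d - e, b - c} = RingHom.ker
    (aeval (![X 0, X 2, X 2, X 4, X 4, X 5] : Fin 6 → MvPolynomial (Fin 6) ℂ)) := by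
  refine span_eq_ker_aeval ?_ fun i => ?_
  · simp [b, c, d, e]
  · fin_cases i <;> simp [b, c, d, e]

theorem span_df_ac_eq_ker : Ideal.span {d - f, a - c} = RingHom.ker
    (aeval (![X 2, X 1, X 2, X 5, X 4, X 5] : Fin 6 → MvPolynomial (Fin 6) ℂ)) := by
  refine span_eq_ker_aeval ?_ fun i => ?_
  · simp [a, c, d, f]
  · fin_cases i <;> simp [a, c, d, f]

theorem span_cd_be_af_eq_ker : Ideal.span {c - d, b - e, a - f} = RingHom.ker
    (aeval (![X 5, X 4, X 3, X 3, X 4, X 5] : Fin 6 → MvPolynomial (Fin 6) ℂ)) := by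
  refine span_eq_ker_aeval ?_ fun i => ?_
  · simp [a, b, c, d, e, f]
  · fin_cases i <;> simp [a, b, c, d, e, f]

theorem span_u_le_ker_aeval {v : Fin 6 → MvPolynomial (Fin 6) ℂ}
    (h0 : aeval v u0 = 0) (h1 : aeval v u1 = 0) (h2 : aeval v u2 = 0) :
    Ideal.span {u0, u1, u2} ≤ RingHom.ker (aeval v : _ →ₐ[ℂ] MvPolynomial (Fin 6) ℂ) :=
  Ideal.span_le.2 (by rintro _ (rfl | rfl | rfl) <;> assumption)

theorem span_u_le : Ideal.span {u0, u1, u2} ≤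
      Ideal.span {b - c, a - c} ⊓
      Ideal.span {e - f, d - f} ⊓
      Ideal.span {e - f, a - b} ⊓
      Ideal.span {d - e, b - c} ⊓
      Ideal.span {d - f, a - c} ⊓
      Ideal.span {c - d, b - e, a - f} := by
  rw [span_abc_eq_ker, span_def_eq_ker, span_ef_ab_eq_ker, span_de_bc_eq_ker, span_df_ac_eq_ker,
    span_cd_be_af_eq_ker]
  refine le_inf (le_inf (le_inf (le_inf (le_inf ?_ ?_) ?_) ?_) ?_) ?_ <;>
  · apply span_u_le_ker_aeval <;> simp [u0, u1, u2, a, b, c, d, e, f] <;> ring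

/-- A product in the kernel of a substitution over a domain, one factor of which is not killed. -/
theorem mem_ker_aeval_of_mul_mem {σ k : Type*} [CommRing k] [IsDomain k]
    {v : σ → MvPolynomial σ k} {g F : MvPolynomial σ k} (hg : aeval v g ≠ 0)
    (h : g * F ∈ RingHom.ker (aeval v : MvPolynomial σ k →ₐ[k] MvPolynomial σ k)) :
    F ∈ RingHom.ker (aeval v : MvPolynomial σ k →ₐ[k] MvPolynomial σ k) := by
  rw [RingHom.mem_ker, map_mul] at h
  exact (mul_eq_zero.1 h).resolve_left hg

/-- The intersection of the four polydiagonals `a = b = c`, `d = e = f`, `e = f, a = b` and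
`d = e, b = c`. -/
theorem exists_of_mem_four {F : MvPolynomial (Fin 6) ℂ} (h1 : F ∈ Ideal.span {b - c, a - c})
    (h2 : F ∈ Ideal.span {e - f, d - f}) (h3 : F ∈ Ideal.span {e - f, a - b})
    (h4 : F ∈ Ideal.span {d - e, b - c}) :
    ∃ r s, F = r * u2 + s * ((a - b) * (e - d)) := by
  obtain ⟨α, β, rfl⟩ := Ideal.mem_span_pair.1 h1
  have hαβ : α + β ∈ Ideal.span {e - f, a - b} := by
    have h : (b - c) * (α + β) ∈ Ideal.span {e - f, a - b} := by
      convert Ideal.sub_mem _ h3 (Ideal.mul_mem_left _ β (Ideal.mem_span_pair.2 ⟨0, 1, rfl⟩))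
        using 1
      ring
    rw [span_ef_ab_eq_ker] at h ⊢
    exact mem_ker_aeval_of_mul_mem (by simp [b, c, sub_eq_zero, X_inj]) h
  obtain ⟨γ, δ, hγδ⟩ := Ideal.mem_span_pair.1 hαβ
  obtain rfl : α = γ * (e - f) + δ * (a - b) - β := by rw [hγδ]; ring
  have hβ : β + δ * (b - c) ∈ Ideal.span {d - e, b - c} := by
    have h : (a - b) * (β + δ * (b - c)) ∈ Ideal.span {d - e, b - c} := by
      convert Ideal.sub_mem _ h4
        (Ideal.mul_mem_left _ (γ * (e - f)) (Ideal.mem_span_pair.2 ⟨0, 1, rfl⟩)) using 1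
      ring
    rw [span_de_bc_eq_ker] at h ⊢
    exact mem_ker_aeval_of_mul_mem (by simp [a, b, sub_eq_zero, X_inj]) h
  obtain ⟨ε, ζ, hεζ⟩ := Ideal.mem_span_pair.1 hβ
  obtain rfl : β = ε * (d - e) + ζ * (b - c) - δ * (b - c) := by rw [hεζ]; ring
  have hζ : ζ ∈ Ideal.span {e - f, d - f} := by
    have h : ((a - b) * (b - c)) * ζ ∈ Ideal.span {e - f, d - f} := by
      convert Ideal.sub_mem _ h2 (Ideal.mem_span_pair.2
        ⟨γ * (b - c) - ε * (a - b), ε * (a - b), rfl⟩) using 1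
      ring
    rw [span_def_eq_ker] at h ⊢
    exact mem_ker_aeval_of_mul_mem (by simp [a, b, c, sub_eq_zero, X_inj]) h
  obtain ⟨η, θ, rfl⟩ := Ideal.mem_span_pair.1 hζ
  refine ⟨γ + (η + θ) * (a - b), -γ - ε - (η + θ) * (a - b) - θ * (b - c), ?_⟩
  rw [u2]
  ring

/-- The intersection of the five polydiagonals of codimension two. -/
theorem exists_of_mem_five {F : MvPolynomial (Fin 6) ℂ} (h1 : F ∈ Ideal.span {b - c, a - c})
    (h2 : F ∈ Ideal.span {e - f, d - f}) (h3 : F ∈ Ideal.span {e - f, a - b})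
    (h4 : F ∈ Ideal.span {d - e, b - c}) (h5 : F ∈ Ideal.span {d - f, a - c}) :
    ∃ r s t, F = r * u2 + s * ((a - b) * (b - c) * (f - d)) +
      t * ((f - e) * (e - d) * (a - c)) := by
  obtain ⟨r, s, rfl⟩ := exists_of_mem_four h1 h2 h3 h4
  have hs : s ∈ Ideal.span {d - f, a - c} := by
    have h : ((a - b) * (e - d)) * s ∈ Ideal.span {d - f, a - c} := by
      convert Ideal.sub_mem _ h5 (Ideal.mem_span_pair.2 ⟨r * (b - c), r * (e - d), rfl⟩) using 1
      rw [u2]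
      ring
    rw [span_df_ac_eq_ker] at h ⊢
    exact mem_ker_aeval_of_mul_mem (by simp [a, b, d, e, sub_eq_zero, X_inj]) h
  obtain ⟨α, β, rfl⟩ := Ideal.mem_span_pair.1 hs
  refine ⟨r + β * (a - b) - α * (e - d), β, -α, ?_⟩
  rw [u2]
  ring

theorem mul_cubic_mem_span_u {s : MvPolynomial (Fin 6) ℂ}
    (hs : s ∈ Ideal.span {c - d, b - e, a - f}) :
    s * ((a - b) * (b - c) * (f - d)) ∈ Ideal.span {u0, u1, u2} := by
  obtain ⟨k, l, m, rfl⟩ := Submodule.mem_span_triple.1 hs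
  refine Submodule.mem_span_triple.2 ⟨k + l + m, k * c + l * b + m * a,
    k * (c ^ 2 - (d - c) * (b - c)) + l * b ^ 2 + m * (b ^ 2 + (a - b) * (b + f)), ?_⟩
  simp only [smul_eq_mul, u0, u1, u2]
  ring

/-- The minimal primary decomposition `𝐈ₛ = 𝔭₁ ∩ ⋯ ∩ 𝔭₆` of the ideal of the
indeterminacy scheme of the Pascal map for the symbol `[A B C; F E D]`: it is the
reduced union of six polydiagonals. -/
theorem pascal_indeterminacy_decomposition :
    Ideal.span {u0, u1, u2} =
      Ideal.span {b - c, a - c} ⊓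
      Ideal.span {e - f, d - f} ⊓
      Ideal.span {e - f, a - b} ⊓
      Ideal.span {d - e, b - c} ⊓
      Ideal.span {d - f, a - c} ⊓
      Ideal.span {c - d, b - e, a - f} := by
  refine le_antisymm span_u_le ?_
  rintro F ⟨⟨⟨⟨⟨h1, h2⟩, h3⟩, h4⟩, h5⟩, h6⟩
  obtain ⟨r, s, t, rfl⟩ := exists_of_mem_five h1 h2 h3 h4 h5
  have hst : s + t ∈ Ideal.span {c - d, b - e, a - f} := by
    rw [span_cd_be_af_eq_ker] at h6 ⊢
    refine mem_ker_aeval_of_mul_mem (g := (a - b) * (b - c) * (f - d))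
      (by simp [a, b, c, d, f, sub_eq_zero, X_inj]) ?_
    rw [RingHom.mem_ker, ← RingHom.mem_ker.1 h6]
    simp [u2, a, b, c, d, e, f]
    ring
  convert Ideal.add_mem _ (mul_cubic_mem_span_u hst)
    (Submodule.mem_span_triple.2 ⟨0, -t, r - t * (b + e), rfl⟩) using 1
  simp only [smul_eq_mul, u0, u1, u2]
  ring

end

end PascalIndet
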